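/- Let k ≥ 1 be an integer and define h_k : ℂ∖{0} → ℝ by h_k(z) = k²·|z|^{2(k−1)}·(1 + |z|^{2k}·u(|z|^{2k})²). Then for every z ∈ ℂ∖{0}: h_k(z)·(∂∂̄h_k)(z) − (∂h_k)(z)·(∂̄h_k)(z) = k⁶·|z|^{6k−6}·M(|z|^{2k}). -/

import Mathlib

open Complex Filter Topology Metric
open scoped ComplexOrder

/-- The function `u(t) = (t-1)/(t log t)` for `t ≠ 1`, extended by `u(1) = 1`. -/
noncomputable def u (t : ℝ) : ℝ := if t = 1 then 1 else (t - 1) / (t * Real.log t)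

/-- Wirtinger derivative `∂g` of a complex-valued function on `ℂ` (real-differentiable sense). -/
noncomputable def wdz (g : ℂ → ℂ) (z : ℂ) : ℂ :=
  (fderiv ℝ g z 1 - Complex.I * fderiv ℝ g z Complex.I) / 2

/-- Wirtinger derivative `∂̄g` of a complex-valued function on `ℂ`. -/
noncomputable def wdzbar (g : ℂ → ℂ) (z : ℂ) : ℂ :=
  (fderiv ℝ g z 1 + Complex.I * fderiv ℝ g z Complex.I) / 2

/-- `∂h` for a real-valued `h`. -/
noncomputable def wdzR (h : ℂ → ℝ) : ℂ → ℂ := wdz fun w => (h w : ℂ)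

/-- `∂̄h` for a real-valued `h`. -/
noncomputable def wdzbarR (h : ℂ → ℝ) : ℂ → ℂ := wdzbar fun w => (h w : ℂ)

/-- `∂∂̄h` for a real-valued `h`. -/
noncomputable def wlapR (h : ℂ → ℝ) : ℂ → ℂ := wdz (wdzbarR h)

/-- The numerator `h·∂∂̄h − ∂h·∂̄h` of (−1/2 times) the Gaussian curvature of `h|dz|²`. -/
noncomputable def curvNum (h : ℂ → ℝ) (z : ℂ) : ℂ :=
  (h z : ℂ) * wlapR h z - wdzR h z * wdzbarR h z

/-- The Gaussian curvature `K = −2(h·∂∂̄h − ∂h·∂̄h)/h³` of the conformal metric `h|dz|²`. -/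
noncomputable def gaussCurv (h : ℂ → ℝ) (z : ℂ) : ℂ :=
  -2 * curvNum h z / (h z : ℂ) ^ 3

/-- The function `M` from the paper, built from `u`, `u′ = deriv u`, `u″ = deriv (deriv u)`. -/
noncomputable def Mfun (t : ℝ) : ℝ :=
  u t ^ 2 + 6 * t * u t * deriv u t + 2 * t ^ 2 * (deriv u t) ^ 2 +
    2 * t ^ 2 * u t * deriv (deriv u) t + 2 * t ^ 2 * (u t) ^ 3 * deriv u t -
    2 * t ^ 3 * (u t) ^ 2 * (deriv u t) ^ 2 + 2 * t ^ 3 * (u t) ^ 3 * deriv (deriv u) t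

/-!
The curvature numerator equals `h² ∂∂̄ log h` wherever `h > 0`, so it is additive up to the factors
`h²` under products, vanishes on `|g|²` for holomorphic `g` because `log |g|²` is harmonic, and
transforms like a `(1,1)`-form under holomorphic substitutions. Hence pulling a density `h` back
along a holomorphic `f` to `|f′|² (h ∘ f)` multiplies its curvature numerator by `|f′|⁶`. Now `h_k`
is the pullback of `h₁ = 1 + |w|² u(|w|²)²` along `z ↦ zᵏ`, for which `|f′|⁶ = k⁶ |z|^(6k-6)`, and
the radial formula for `F(|w|²)` with `F(t) = 1 + t u(t)²` identifies the curvature numerator of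
`h₁` with `M(|w|²)`.
-/

section ContDiffAtTwo

variable {𝕜 E F : Type*} [NontriviallyNormedField 𝕜] [NormedAddCommGroup E] [NormedSpace 𝕜 E]
  [NormedAddCommGroup F] [NormedSpace 𝕜 F]

theorem eventually_differentiableAt_of_contDiffAt_two {φ : E → F} {x : E}
    (hφ : ContDiffAt 𝕜 2 φ x) : ∀ᶠ y in 𝓝 x, DifferentiableAt 𝕜 φ y :=
  (hφ.eventually (by simp)).mono fun _ hy => hy.differentiableAt two_ne_zero

theorem differentiableAt_deriv_of_contDiffAt_two {φ : 𝕜 → F} {x : 𝕜} (hφ : ContDiffAt 𝕜 2 φ x) :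
    DifferentiableAt 𝕜 (deriv φ) x :=
  (hφ.derivWithin (m := 1) (by norm_num)).differentiableAt one_ne_zero

end ContDiffAtTwo

section Wirtinger

open scoped ComplexConjugate

variable {f g : ℂ → ℂ} {z : ℂ}

theorem fderiv_apply_eq_wdz_mul_add_wdzbar_mul_conj (g : ℂ → ℂ) (z v : ℂ) :
    fderiv ℝ g z v = wdz g z * v + wdzbar g z * conj v := by
  have hlin : fderiv ℝ g z v = v.re * fderiv ℝ g z 1 + v.im * fderiv ℝ g z I := by
    have hv : v = v.re • (1 : ℂ) + v.im • I := by simp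
    conv_lhs => rw [hv, map_add, map_smul, map_smul, real_smul, real_smul]
  have hsum : v + conj v = 2 * v.re := by rw [add_conj, ofReal_mul, ofReal_ofNat]
  have hdiff : v - conj v = 2 * v.im * I := by rw [sub_conj, ofReal_mul, ofReal_ofNat]
  rw [hlin, wdz, wdzbar]
  linear_combination (-fderiv ℝ g z 1 / 2) * hsum + I * fderiv ℝ g z I / 2 * hdiff +
    v.im * fderiv ℝ g z I * I_sq

theorem wdz_eq_of_fderiv_apply {a b : ℂ} (h : ∀ v, fderiv ℝ g z v = a * v + b * conj v) :
    wdz g z = a := by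
  rw [wdz, h, h, map_one, conj_I]
  linear_combination (b - a) / 2 * I_sq

theorem wdzbar_eq_of_fderiv_apply {a b : ℂ} (h : ∀ v, fderiv ℝ g z v = a * v + b * conj v) :
    wdzbar g z = b := by
  rw [wdzbar, h, h, map_one, conj_I]
  linear_combination (a - b) / 2 * I_sq

theorem wdz_congr_of_eventuallyEq (h : f =ᶠ[𝓝 z] g) : wdz f z = wdz g z := by
  rw [wdz, wdz, h.fderiv_eq]

theorem wdz_add (hf : DifferentiableAt ℝ f z) (hg : DifferentiableAt ℝ g z) :
    wdz (fun w => f w + g w) z = wdz f z + wdz g z := by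
  rw [wdz, wdz, wdz, fderiv_fun_add hf hg, add_apply, add_apply]
  ring

theorem fderiv_fun_mul_apply_eq (hf : DifferentiableAt ℝ f z) (hg : DifferentiableAt ℝ g z)
    (v : ℂ) :
    fderiv ℝ (fun w => f w * g w) z v = (wdz f z * g z + f z * wdz g z) * v +
      (wdzbar f z * g z + f z * wdzbar g z) * conj v := by
  rw [fderiv_fun_mul hf hg]
  simp only [add_apply, smul_apply, smul_eq_mul, fderiv_apply_eq_wdz_mul_add_wdzbar_mul_conj]
  ring

theorem wdz_mul (hf : DifferentiableAt ℝ f z) (hg : DifferentiableAt ℝ g z) :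
    wdz (fun w => f w * g w) z = wdz f z * g z + f z * wdz g z :=
  wdz_eq_of_fderiv_apply (fderiv_fun_mul_apply_eq hf hg)

theorem wdzbar_mul (hf : DifferentiableAt ℝ f z) (hg : DifferentiableAt ℝ g z) :
    wdzbar (fun w => f w * g w) z = wdzbar f z * g z + f z * wdzbar g z :=
  wdzbar_eq_of_fderiv_apply (fderiv_fun_mul_apply_eq hf hg)

theorem fderiv_real_apply_of_differentiableAt_complex (hf : DifferentiableAt ℂ f z) (v : ℂ) :
    fderiv ℝ f z v = deriv f z * v := by
  rw [hf.fderiv_restrictScalars ℝ, ContinuousLinearMap.coe_restrictScalars', fderiv_eq_smul_deriv,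
    smul_eq_mul, mul_comm]

theorem fderiv_comp_holomorphic_apply (hg : DifferentiableAt ℝ g (f z))
    (hf : DifferentiableAt ℂ f z) (v : ℂ) :
    fderiv ℝ (fun w => g (f w)) z v =
      wdz g (f z) * deriv f z * v + wdzbar g (f z) * conj (deriv f z) * conj v := by
  rw [fderiv_fun_comp z hg (hf.restrictScalars ℝ), ContinuousLinearMap.comp_apply,
    fderiv_real_apply_of_differentiableAt_complex hf, fderiv_apply_eq_wdz_mul_add_wdzbar_mul_conj,
    map_mul]
  ring

theorem wdz_comp_holomorphic (hg : DifferentiableAt ℝ g (f z)) (hf : DifferentiableAt ℂ f z) :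
    wdz (fun w => g (f w)) z = wdz g (f z) * deriv f z :=
  wdz_eq_of_fderiv_apply (fderiv_comp_holomorphic_apply hg hf)

theorem wdzbar_comp_holomorphic (hg : DifferentiableAt ℝ g (f z)) (hf : DifferentiableAt ℂ f z) :
    wdzbar (fun w => g (f w)) z = wdzbar g (f z) * conj (deriv f z) :=
  wdzbar_eq_of_fderiv_apply (fderiv_comp_holomorphic_apply hg hf)

theorem wdz_id (z : ℂ) : wdz (fun w => w) z = 1 := by
  simp [wdz]

theorem wdz_conj (z : ℂ) : wdz conj z = 0 :=
  wdz_eq_of_fderiv_apply (b := 1) fun v => by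
    rw [show (conj : ℂ → ℂ) = conjCLE from rfl, conjCLE.fderiv]
    simp

theorem wdz_conj_holomorphic (hf : DifferentiableAt ℂ f z) :
    wdz (fun w => conj (f w)) z = 0 := by
  rw [wdz_comp_holomorphic (g := conj) conjCLE.differentiableAt hf, wdz_conj, zero_mul]

theorem differentiableAt_ofReal_comp {h : ℂ → ℝ} (hh : DifferentiableAt ℝ h z) :
    DifferentiableAt ℝ (fun w => (h w : ℂ)) z :=
  ofRealCLM.differentiableAt.comp z hh

theorem fderiv_ofReal_comp_apply {h : ℂ → ℝ} (hh : DifferentiableAt ℝ h z) (v : ℂ) :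
    fderiv ℝ (fun w => (h w : ℂ)) z v = (fderiv ℝ h z v : ℝ) :=
  DFunLike.congr_fun (ofRealCLM.hasFDerivAt.comp z hh.hasFDerivAt).fderiv v

theorem contDiffAt_ofReal_comp {h : ℂ → ℝ} {n : WithTop ℕ∞} (hh : ContDiffAt ℝ n h z) :
    ContDiffAt ℝ n (fun w => (h w : ℂ)) z :=
  ofRealCLM.contDiff.contDiffAt.fun_comp z hh

theorem differentiableAt_wdzbarR {h : ℂ → ℝ} (hh : ContDiffAt ℝ 2 h z) :
    DifferentiableAt ℝ (wdzbarR h) z := by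
  have hD : DifferentiableAt ℝ (fderiv ℝ fun w => (h w : ℂ)) z :=
    ((contDiffAt_ofReal_comp hh).fderiv_right (m := 1) (by norm_num)).differentiableAt one_ne_zero
  unfold wdzbarR wdzbar
  fun_prop

section RealValued

variable {h p : ℂ → ℝ}

theorem wdzR_mul (hp : DifferentiableAt ℝ p z) (hh : DifferentiableAt ℝ h z) :
    wdzR (fun w => p w * h w) z = wdzR p z * h z + p z * wdzR h z := by
  simpa only [wdzR, ofReal_mul] using
    wdz_mul (differentiableAt_ofReal_comp hp) (differentiableAt_ofReal_comp hh)

theorem wdzbarR_mul (hp : DifferentiableAt ℝ p z) (hh : DifferentiableAt ℝ h z) :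
    wdzbarR (fun w => p w * h w) z = wdzbarR p z * h z + p z * wdzbarR h z := by
  simpa only [wdzbarR, ofReal_mul] using
    wdzbar_mul (differentiableAt_ofReal_comp hp) (differentiableAt_ofReal_comp hh)

theorem wlapR_mul (hp : ContDiffAt ℝ 2 p z) (hh : ContDiffAt ℝ 2 h z) :
    wlapR (fun w => p w * h w) z =
      wlapR p z * h z + wdzbarR p z * wdzR h z + wdzR p z * wdzbarR h z + p z * wlapR h z := by
  have hbar : wdzbarR (fun w => p w * h w) =ᶠ[𝓝 z]
      fun w => wdzbarR p w * h w + p w * wdzbarR h w := by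
    filter_upwards [eventually_differentiableAt_of_contDiffAt_two hp,
      eventually_differentiableAt_of_contDiffAt_two hh] with w hpw hhw using wdzbarR_mul hpw hhw
  have hp₀ := differentiableAt_ofReal_comp (hp.differentiableAt two_ne_zero)
  have hh₀ := differentiableAt_ofReal_comp (hh.differentiableAt two_ne_zero)
  have hp₁ := differentiableAt_wdzbarR hp
  have hh₁ := differentiableAt_wdzbarR hh
  rw [wlapR, wdz_congr_of_eventuallyEq hbar, wdz_add (hp₁.fun_mul hh₀) (hp₀.fun_mul hh₁),
    wdz_mul hp₁ hh₀, wdz_mul hp₀ hh₁]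
  simp only [wlapR, wdzR]
  ring

theorem wdzR_comp_holomorphic (hh : DifferentiableAt ℝ h (f z)) (hf : DifferentiableAt ℂ f z) :
    wdzR (fun w => h (f w)) z = wdzR h (f z) * deriv f z :=
  wdz_comp_holomorphic (differentiableAt_ofReal_comp hh) hf

theorem wdzbarR_comp_holomorphic (hh : DifferentiableAt ℝ h (f z))
    (hf : DifferentiableAt ℂ f z) :
    wdzbarR (fun w => h (f w)) z = wdzbarR h (f z) * conj (deriv f z) :=
  wdzbar_comp_holomorphic (differentiableAt_ofReal_comp hh) hf

theorem wlapR_comp_holomorphic (hh : ContDiffAt ℝ 2 h (f z)) (hf : AnalyticAt ℂ f z) :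
    wlapR (fun w => h (f w)) z = wlapR h (f z) * (deriv f z * conj (deriv f z)) := by
  have hbar : wdzbarR (fun w => h (f w)) =ᶠ[𝓝 z]
      fun w => wdzbarR h (f w) * conj (deriv f w) := by
    filter_upwards [hf.continuousAt.eventually (eventually_differentiableAt_of_contDiffAt_two hh),
      hf.eventually_analyticAt] with w hhw hfw
    exact wdzbarR_comp_holomorphic hhw hfw.differentiableAt
  have hf₀ := hf.differentiableAt
  have hf₁ := hf.deriv.differentiableAt
  have hh₁ := differentiableAt_wdzbarR hh
  have hcomp : DifferentiableAt ℝ (fun w => wdzbarR h (f w)) z :=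
    hh₁.comp z (hf₀.restrictScalars ℝ)
  have hconj : DifferentiableAt ℝ (fun w => conj (deriv f w)) z := (hf₁.restrictScalars ℝ).star
  rw [wlapR, wdz_congr_of_eventuallyEq hbar, wdz_mul hcomp hconj,
    wdz_conj_holomorphic hf₁, wdz_comp_holomorphic hh₁ hf₀, wlapR]
  ring

variable {F : ℝ → ℝ}

theorem fderiv_ofReal_real_comp_apply (hF : DifferentiableAt ℝ F (h z))
    (hh : DifferentiableAt ℝ h z) (v : ℂ) :
    fderiv ℝ (fun w => (F (h w) : ℂ)) z v =
      deriv F (h z) * wdzR h z * v + deriv F (h z) * wdzbarR h z * conj v := by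
  have hcast : ((fderiv ℝ h z v : ℝ) : ℂ) = wdzR h z * v + wdzbarR h z * conj v := by
    rw [← fderiv_ofReal_comp_apply hh, fderiv_apply_eq_wdz_mul_add_wdzbar_mul_conj, wdzR, wdzbarR]
  have hchain : fderiv ℝ (fun w => F (h w)) z v = deriv F (h z) * fderiv ℝ h z v :=
    DFunLike.congr_fun (hF.hasDerivAt.comp_hasFDerivAt z hh.hasFDerivAt).fderiv v
  have hcomp : DifferentiableAt ℝ (fun w => F (h w)) z := hF.comp z hh
  rw [fderiv_ofReal_comp_apply hcomp, hchain, ofReal_mul, hcast]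
  ring

theorem wdzR_real_comp (hF : DifferentiableAt ℝ F (h z)) (hh : DifferentiableAt ℝ h z) :
    wdzR (fun w => F (h w)) z = deriv F (h z) * wdzR h z :=
  wdz_eq_of_fderiv_apply (fderiv_ofReal_real_comp_apply hF hh)

theorem wdzbarR_real_comp (hF : DifferentiableAt ℝ F (h z)) (hh : DifferentiableAt ℝ h z) :
    wdzbarR (fun w => F (h w)) z = deriv F (h z) * wdzbarR h z :=
  wdzbar_eq_of_fderiv_apply (fderiv_ofReal_real_comp_apply hF hh)

theorem wlapR_real_comp (hF : ContDiffAt ℝ 2 F (h z)) (hh : ContDiffAt ℝ 2 h z) :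
    wlapR (fun w => F (h w)) z =
      deriv (deriv F) (h z) * (wdzR h z * wdzbarR h z) + deriv F (h z) * wlapR h z := by
  have hbar : wdzbarR (fun w => F (h w)) =ᶠ[𝓝 z]
      fun w => (deriv F (h w) : ℝ) * wdzbarR h w := by
    filter_upwards [hh.continuousAt.eventually (eventually_differentiableAt_of_contDiffAt_two hF),
      eventually_differentiableAt_of_contDiffAt_two hh] with w hFw hhw
    exact wdzbarR_real_comp hFw hhw
  have hh₀ := hh.differentiableAt two_ne_zero
  have hF₁ := differentiableAt_deriv_of_contDiffAt_two hF
  have hcomp : DifferentiableAt ℝ (fun w => deriv F (h w)) z := hF₁.comp z hh₀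
  have hdF : wdz (fun w => ((deriv F (h w) : ℝ) : ℂ)) z = deriv (deriv F) (h z) * wdzR h z :=
    wdzR_real_comp hF₁ hh₀
  rw [wlapR, wdz_congr_of_eventuallyEq hbar,
    wdz_mul (differentiableAt_ofReal_comp hcomp) (differentiableAt_wdzbarR hh), hdF, wlapR]
  ring

end RealValued

theorem fderiv_ofReal_norm_sq_apply (z v : ℂ) :
    fderiv ℝ (fun w : ℂ => ((‖w‖ ^ 2 : ℝ) : ℂ)) z v = conj z * v + z * conj v := by
  rw [fderiv_ofReal_comp_apply ((contDiff_norm_sq ℝ (n := 1)).differentiable one_ne_zero z),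
    fderiv_norm_sq_apply, smul_apply, innerSL_apply_apply, Complex.inner, nsmul_eq_mul,
    Nat.cast_ofNat, mul_comm v, ← add_conj, map_mul, conj_conj]

theorem wdzR_norm_sq (z : ℂ) : wdzR (fun w => ‖w‖ ^ 2) z = conj z :=
  wdz_eq_of_fderiv_apply (fderiv_ofReal_norm_sq_apply z)

theorem wdzbarR_norm_sq (z : ℂ) : wdzbarR (fun w => ‖w‖ ^ 2) z = z :=
  wdzbar_eq_of_fderiv_apply (fderiv_ofReal_norm_sq_apply z)

theorem wlapR_norm_sq (z : ℂ) : wlapR (fun w => ‖w‖ ^ 2) z = 1 := by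
  rw [wlapR, funext wdzbarR_norm_sq, wdz_id]

end Wirtinger

section CurvatureNumerator

open scoped ComplexConjugate

variable {h p : ℂ → ℝ} {f : ℂ → ℂ} {z : ℂ}

theorem curvNum_mul (hp : ContDiffAt ℝ 2 p z) (hh : ContDiffAt ℝ 2 h z) :
    curvNum (fun w => p w * h w) z = p z ^ 2 * curvNum h z + h z ^ 2 * curvNum p z := by
  have hp₀ := hp.differentiableAt two_ne_zero
  have hh₀ := hh.differentiableAt two_ne_zero
  simp only [curvNum, wlapR_mul hp hh, wdzR_mul hp₀ hh₀, wdzbarR_mul hp₀ hh₀, ofReal_mul]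
  ring

theorem curvNum_comp_holomorphic (hh : ContDiffAt ℝ 2 h (f z)) (hf : AnalyticAt ℂ f z) :
    curvNum (fun w => h (f w)) z = ‖deriv f z‖ ^ 2 * curvNum h (f z) := by
  have hh₀ := hh.differentiableAt two_ne_zero
  have hf₀ := hf.differentiableAt
  simp only [curvNum, wlapR_comp_holomorphic hh hf, wdzR_comp_holomorphic hh₀ hf₀,
    wdzbarR_comp_holomorphic hh₀ hf₀, ← mul_conj']
  ring

theorem curvNum_real_comp_norm_sq {F : ℝ → ℝ} (hF : ContDiffAt ℝ 2 F (‖z‖ ^ 2)) :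
    curvNum (fun w => F (‖w‖ ^ 2)) z =
      ((F (‖z‖ ^ 2) * (deriv F (‖z‖ ^ 2) + ‖z‖ ^ 2 * deriv (deriv F) (‖z‖ ^ 2)) -
        ‖z‖ ^ 2 * deriv F (‖z‖ ^ 2) ^ 2 : ℝ) : ℂ) := by
  have hN : ContDiffAt ℝ 2 (fun w : ℂ => ‖w‖ ^ 2) z := (contDiff_norm_sq ℝ).contDiffAt
  have hF₀ := hF.differentiableAt two_ne_zero
  have hN₀ := hN.differentiableAt two_ne_zero
  rw [curvNum, wlapR_real_comp hF hN, wdzR_real_comp hF₀ hN₀, wdzbarR_real_comp hF₀ hN₀,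
    wdzR_norm_sq, wdzbarR_norm_sq, wlapR_norm_sq]
  push_cast
  rw [← mul_conj']
  ring

theorem curvNum_norm_sq (z : ℂ) : curvNum (fun w => ‖w‖ ^ 2) z = 0 := by
  rw [curvNum, wlapR_norm_sq, wdzR_norm_sq, wdzbarR_norm_sq, ofReal_pow, ← conj_mul']
  ring

theorem curvNum_norm_sq_holomorphic (hf : AnalyticAt ℂ f z) :
    curvNum (fun w => ‖f w‖ ^ 2) z = 0 := by
  rw [curvNum_comp_holomorphic (h := fun w => ‖w‖ ^ 2) (contDiff_norm_sq ℝ).contDiffAt hf,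
    curvNum_norm_sq, mul_zero]

/-- The density `|f′|² (h ∘ f)` of the pullback of the conformal metric `h |dz|²` along a
holomorphic map `f`. -/
noncomputable def pullbackDensity (f : ℂ → ℂ) (h : ℂ → ℝ) (w : ℂ) : ℝ :=
  ‖deriv f w‖ ^ 2 * h (f w)

theorem curvNum_pullbackDensity (hh : ContDiffAt ℝ 2 h (f z)) (hf : AnalyticAt ℂ f z) :
    curvNum (pullbackDensity f h) z = ‖deriv f z‖ ^ 6 * curvNum h (f z) := by
  have hf' : ContDiffAt ℝ 2 (fun w => ‖deriv f w‖ ^ 2) z :=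
    (hf.deriv.contDiffAt.restrict_scalars ℝ).norm_sq ℝ
  have hhf : ContDiffAt ℝ 2 (fun w => h (f w)) z :=
    hh.fun_comp z (hf.contDiffAt.restrict_scalars ℝ)
  unfold pullbackDensity
  rw [curvNum_mul hf' hhf, curvNum_norm_sq_holomorphic hf.deriv, curvNum_comp_holomorphic hh hf]
  push_cast
  ring

end CurvatureNumerator

section BaseDensity

theorem u_eq_inv_mul_dslope_log (t : ℝ) : u t = (t * dslope Real.log 1 t)⁻¹ := by
  unfold u
  split_ifs with ht
  · simp [ht, dslope_same]
  · rw [dslope_of_ne _ ht, slope_def_field, Real.log_one, sub_zero, mul_div_assoc', inv_div]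

theorem analyticAt_u {t : ℝ} (ht : 0 < t) : AnalyticAt ℝ u t := by
  by_cases h1 : t = 1
  · subst h1
    obtain ⟨p, hp⟩ := analyticAt_log ht
    have hslope : AnalyticAt ℝ (dslope Real.log 1) 1 := ⟨_, hp.has_fpower_series_dslope_fslope⟩
    rw [funext u_eq_inv_mul_dslope_log]
    exact (analyticAt_id.mul hslope).inv (by simp [dslope_same])
  · have hu : (fun s : ℝ => (s - 1) / (s * Real.log s)) =ᶠ[𝓝 t] u := by
      filter_upwards [isOpen_ne.mem_nhds h1] with s hs using (if_neg hs).symm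
    exact ((analyticAt_id.sub analyticAt_const).div (analyticAt_id.mul (analyticAt_log ht))
      (mul_ne_zero ht.ne' (Real.log_ne_zero_of_pos_of_ne_one ht h1))).congr hu

variable {v : ℝ → ℝ} {t : ℝ}

theorem deriv_one_add_mul_sq (hv : DifferentiableAt ℝ v t) :
    deriv (fun s => 1 + s * v s ^ 2) t = v t ^ 2 + 2 * t * v t * deriv v t := by
  have := ((hasDerivAt_id' t).fun_mul (hv.hasDerivAt.fun_pow 2)).const_add 1
  rw [this.deriv]
  ring

theorem deriv_deriv_one_add_mul_sq (hv : ContDiffAt ℝ 2 v t) :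
    deriv (deriv fun s => 1 + s * v s ^ 2) t =
      4 * v t * deriv v t + 2 * t * deriv v t ^ 2 + 2 * t * v t * deriv (deriv v) t := by
  have hderiv : deriv (fun s => 1 + s * v s ^ 2) =ᶠ[𝓝 t]
      fun s => v s ^ 2 + 2 * s * v s * deriv v s :=
    (eventually_differentiableAt_of_contDiffAt_two hv).mono fun s hs => deriv_one_add_mul_sq hs
  have hv₀ := (hv.differentiableAt two_ne_zero).hasDerivAt
  have hv₁ := (differentiableAt_deriv_of_contDiffAt_two hv).hasDerivAt
  have := (hv₀.fun_pow 2).fun_add ((((hasDerivAt_id' t).const_mul 2).fun_mul hv₀).fun_mul hv₁)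
  rw [hderiv.deriv_eq, this.deriv]
  ring

/-- The radial density `h₁(w) = 1 + |w|² u(|w|²)²`, of which every `h_k` is a pullback. -/
noncomputable def baseDensity (w : ℂ) : ℝ :=
  1 + ‖w‖ ^ 2 * u (‖w‖ ^ 2) ^ 2

theorem contDiffAt_baseDensity {w : ℂ} (hw : w ≠ 0) : ContDiffAt ℝ 2 baseDensity w := by
  have hN : ContDiffAt ℝ 2 (fun w : ℂ => ‖w‖ ^ 2) w := (contDiff_norm_sq ℝ).contDiffAt
  have hu : ContDiffAt ℝ 2 (fun w : ℂ => u (‖w‖ ^ 2)) w :=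
    (analyticAt_u (by positivity)).contDiffAt.fun_comp w hN
  exact contDiffAt_const.add (hN.mul (hu.pow 2))

theorem curvNum_baseDensity {w : ℂ} (hw : w ≠ 0) : curvNum baseDensity w = Mfun (‖w‖ ^ 2) := by
  have hu : ContDiffAt ℝ 2 u (‖w‖ ^ 2) := (analyticAt_u (by positivity)).contDiffAt
  have hF : ContDiffAt ℝ 2 (fun t => 1 + t * u t ^ 2) (‖w‖ ^ 2) :=
    contDiffAt_const.add (contDiffAt_id.mul (hu.pow 2))
  unfold baseDensity
  rw [curvNum_real_comp_norm_sq hF, deriv_one_add_mul_sq (hu.differentiableAt two_ne_zero),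
    deriv_deriv_one_add_mul_sq hu, Mfun]
  push_cast
  ring

theorem pullbackDensity_pow_baseDensity (k : ℕ) :
    pullbackDensity (fun w => w ^ k) baseDensity = fun w =>
      (k : ℝ) ^ 2 * ‖w‖ ^ (2 * (k - 1)) *
        (1 + ‖w‖ ^ (2 * k) * u (‖w‖ ^ (2 * k)) ^ 2) := by
  funext w
  simp only [pullbackDensity, baseDensity, deriv_pow_field, norm_mul, norm_natCast, norm_pow,
    mul_pow, ← pow_mul, mul_comm k, mul_comm (k - 1)]

end BaseDensity

/-- the curvature numerator identity
`h_k·∂∂̄h_k − ∂h_k·∂̄h_k = k⁶|z|^{6k−6}·M(|z|^{2k})` on `ℂ∖{0}`. -/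
theorem stmt13 (k : ℕ) (hk : 1 ≤ k) :
    ∀ z : ℂ, z ≠ 0 →
      curvNum (fun w =>
          (k : ℝ) ^ 2 * ‖w‖ ^ (2 * (k - 1)) *
            (1 + ‖w‖ ^ (2 * k) * u (‖w‖ ^ (2 * k)) ^ 2)) z =
        (((k : ℝ) ^ 6 * ‖z‖ ^ (6 * k - 6) * Mfun (‖z‖ ^ (2 * k)) : ℝ) : ℂ) := by
  intro z hz
  have hzk : z ^ k ≠ 0 := pow_ne_zero k hz
  have hfactor : ‖deriv (fun w : ℂ => w ^ k) z‖ ^ 6 = (k : ℝ) ^ 6 * ‖z‖ ^ (6 * k - 6) := by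
    rw [deriv_pow_field, norm_mul, norm_natCast, norm_pow, mul_pow, ← pow_mul, Nat.sub_mul,
      one_mul, mul_comm k]
  have hpull := curvNum_pullbackDensity (f := fun w => w ^ k) (contDiffAt_baseDensity hzk)
    (analyticAt_id.pow k)
  rw [← pullbackDensity_pow_baseDensity, hpull, curvNum_baseDensity hzk, norm_pow, ← pow_mul,
    mul_comm k 2, ← hfactor, ofReal_mul, ofReal_pow]
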